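/- For a ∈ (0,1) and even integer p ≠ 0, ∫₀^∞ sin(ax)J_p(x)/x dx = (1/p)sin(p arcsin(a)); and ∫₀^∞ sin(ax)J_0(x)/x dx = arcsin(a). -/

import Mathlib

open Real

noncomputable section

/-- The Bessel function of the first kind of integer order `p`,
`J_p(x) = (1/π) ∫₀^π cos(pt - x sin t) dt`. -/
def besselJ (p : ℤ) (x : ℝ) : ℝ :=
  (1 / π) * ∫ t in (0 : ℝ)..π, Real.cos (p * t - x * Real.sin t)

/-!
For even `p`, the reflection `t ↦ π - t` turns the integral of `J_p` into one over `[-π/2, π/2]`,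
and parity then gives `sin (a x) J_p(x) = (1/π) ∫ cos (p t) sin ((a - sin t) x) dt`. Dividing by `x`
and integrating in `x` first, Dirichlet's integral `∫₀^∞ sin (c x) / x dx = (π/2) sign c` yields
`(1/2) ∫ cos (p t) sign (a - sin t) dt`; the sign changes exactly at `t = arcsin a`, which leaves
`∫₀^{arcsin a} cos (p t) dt`. Absolute convergence of the integral in `x` rests on
`J_p(x) = O(x^{-1/2})`, obtained by cutting out a neighbourhood of size `x^{-1/2}` of the stationary
points `t = ±π/2` of the phase and integrating by parts on the rest.
-/

open MeasureTheory Set Filter Topology Asymptotics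

/-! ### The sine integral -/

/-- The sine integral `Si(R) = ∫₀^R sin x / x dx`, written with `sinc` so that the integrand is
continuous at `0`. -/
def sinIntegral (R : ℝ) : ℝ := ∫ x in (0 : ℝ)..R, sinc x

lemma sinIntegral_zero : sinIntegral 0 = 0 := intervalIntegral.integral_same

lemma sinIntegral_neg (R : ℝ) : sinIntegral (-R) = -sinIntegral R := by
  have h := intervalIntegral.integral_comp_neg (a := 0) (b := R) sinc
  simp only [sinc_neg, neg_zero] at h
  rw [sinIntegral, sinIntegral, h, intervalIntegral.integral_symm]

lemma continuous_sinIntegral : Continuous sinIntegral :=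
  intervalIntegral.continuous_primitive (fun a b ↦ continuous_sinc.intervalIntegrable a b) 0

lemma integral_mul_sinc_mul (c R : ℝ) :
    ∫ x in (0 : ℝ)..R, c * sinc (c * x) = sinIntegral (c * R) := by
  rw [intervalIntegral.integral_const_mul, intervalIntegral.mul_integral_comp_mul_left, mul_zero,
    sinIntegral]

lemma mul_sinc_mul {x : ℝ} (c : ℝ) (hx : x ≠ 0) : c * sinc (c * x) = sin (c * x) / x := by
  rcases eq_or_ne c 0 with rfl | hc
  · simp
  · rw [sinc_of_ne_zero (mul_ne_zero hc hx)]
    field_simp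

lemma integral_sin_mul_exp_neg_mul (R y : ℝ) :
    ∫ x in (0 : ℝ)..R, sin x * exp (-x * y) =
      (1 + y ^ 2)⁻¹ - exp (-R * y) * ((cos R + y * sin R) / (1 + y ^ 2)) := by
  have hy : 1 + y ^ 2 ≠ 0 := by positivity
  have hderiv (x : ℝ) : HasDerivAt (fun x ↦ -(exp (-x * y) * ((cos x + y * sin x) / (1 + y ^ 2))))
      (sin x * exp (-x * y)) x := by
    have hexp : HasDerivAt (fun x ↦ exp (-x * y)) (exp (-x * y) * (-1 * y)) x :=
      ((hasDerivAt_id x).neg.mul_const y).exp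
    have htrig : HasDerivAt (fun x ↦ cos x + y * sin x) (-sin x + y * cos x) x :=
      (hasDerivAt_cos x).add ((hasDerivAt_sin x).const_mul y)
    refine (hexp.mul (htrig.div_const (1 + y ^ 2))).neg.congr_deriv ?_
    field_simp
    ring
  rw [intervalIntegral.integral_eq_sub_of_hasDerivAt (fun x _ ↦ hderiv x)
    (Continuous.intervalIntegrable (by fun_prop) 0 R)]
  simp
  ring

lemma abs_cos_add_mul_sin_div_le_one (R y : ℝ) : |(cos R + y * sin R) / (1 + y ^ 2)| ≤ 1 := by
  have hy : 0 < 1 + y ^ 2 := by positivity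
  rw [abs_div, abs_of_pos hy, div_le_one hy]
  refine abs_le_of_sq_le_sq ?_ hy.le
  -- Cauchy–Schwarz: `(cos R + y sin R)² + (y cos R - sin R)² = 1 + y²`
  nlinarith [sin_sq_add_cos_sq R, sq_nonneg (y * cos R - sin R), sq_nonneg y]

lemma norm_exp_mul_cos_add_mul_sin_div_le (R y : ℝ) :
    ‖exp (-R * y) * ((cos R + y * sin R) / (1 + y ^ 2))‖ ≤ exp (-R * y) := by
  rw [norm_mul, norm_of_nonneg (exp_pos _).le]
  exact mul_le_of_le_one_right (exp_pos _).le (abs_cos_add_mul_sin_div_le_one R y)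

lemma integral_Ioi_exp_neg_mul {x : ℝ} (hx : 0 < x) : ∫ y in Ioi (0 : ℝ), exp (-x * y) = x⁻¹ := by
  rw [integral_exp_mul_Ioi (neg_lt_zero.2 hx)]
  simp [neg_div_neg_eq]

lemma integrable_sin_mul_exp_neg_mul {R : ℝ} (hR : 0 ≤ R) :
    Integrable (Function.uncurry fun x y : ℝ ↦ sin x * exp (-x * y))
      ((volume.restrict (uIoc 0 R)).prod (volume.restrict (Ioi 0))) := by
  rw [uIoc_of_le hR, integrable_prod_iff (Continuous.aestronglyMeasurable (by fun_prop))]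
  constructor
  · filter_upwards [ae_restrict_mem measurableSet_Ioc] with x hx
    exact (integrableOn_exp_mul_Ioi (neg_lt_zero.2 hx.1) 0).const_mul (sin x)
  · have hsinc : IntegrableOn (fun x ↦ |sinc x|) (Ioc 0 R) :=
      (continuous_sinc.abs.intervalIntegrable 0 R).1
    refine hsinc.congr ?_
    filter_upwards [ae_restrict_mem measurableSet_Ioc] with x hx
    simp only [Function.uncurry, norm_mul, norm_eq_abs, abs_exp]
    rw [integral_const_mul, integral_Ioi_exp_neg_mul hx.1, sinc_of_ne_zero hx.1.ne', abs_div,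
      abs_of_pos hx.1, div_eq_mul_inv]

lemma sinIntegral_eq_integral_integral {R : ℝ} (hR : 0 ≤ R) :
    sinIntegral R = ∫ x in (0 : ℝ)..R, ∫ y in Ioi (0 : ℝ), sin x * exp (-x * y) := by
  refine intervalIntegral.integral_congr_ae (Eventually.of_forall fun x hx ↦ ?_)
  rw [uIoc_of_le hR] at hx
  rw [integral_const_mul, integral_Ioi_exp_neg_mul hx.1, sinc_of_ne_zero hx.1.ne', div_eq_mul_inv]

lemma sinIntegral_eq_pi_div_two_sub {R : ℝ} (hR : 0 < R) :
    sinIntegral R =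
      π / 2 - ∫ y in Ioi (0 : ℝ), exp (-R * y) * ((cos R + y * sin R) / (1 + y ^ 2)) := by
  have hcont : Continuous fun y ↦ exp (-R * y) * ((cos R + y * sin R) / (1 + y ^ 2)) := by
    fun_prop (disch := intro y; positivity)
  have hint : IntegrableOn (fun y ↦ exp (-R * y) * ((cos R + y * sin R) / (1 + y ^ 2))) (Ioi 0) :=
    (integrableOn_exp_mul_Ioi (neg_lt_zero.2 hR) 0).mono' hcont.aestronglyMeasurable
      (ae_of_all _ (norm_exp_mul_cos_add_mul_sin_div_le R))
  rw [sinIntegral_eq_integral_integral hR.le,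
    intervalIntegral_integral_swap (integrable_sin_mul_exp_neg_mul hR.le)]
  simp_rw [integral_sin_mul_exp_neg_mul]
  rw [integral_sub integrable_inv_one_add_sq.integrableOn hint, integral_Ioi_inv_one_add_sq,
    arctan_zero, sub_zero]

lemma abs_sinIntegral_sub_pi_div_two_le {R : ℝ} (hR : 0 < R) : |sinIntegral R - π / 2| ≤ R⁻¹ := by
  rw [sinIntegral_eq_pi_div_two_sub hR, sub_sub_cancel_left, abs_neg,
    ← integral_Ioi_exp_neg_mul hR]
  exact norm_integral_le_of_norm_le (integrableOn_exp_mul_Ioi (neg_lt_zero.2 hR) 0)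
    (ae_of_all _ (norm_exp_mul_cos_add_mul_sin_div_le R))

lemma tendsto_sinIntegral_atTop : Tendsto sinIntegral atTop (𝓝 (π / 2)) := by
  rw [tendsto_iff_norm_sub_tendsto_zero]
  refine squeeze_zero' (Eventually.of_forall fun _ ↦ norm_nonneg _) ?_ tendsto_inv_atTop_zero
  filter_upwards [eventually_gt_atTop 0] with R hR
  exact abs_sinIntegral_sub_pi_div_two_le hR

lemma tendsto_sinIntegral_mul_atTop (c : ℝ) :
    Tendsto (fun R ↦ sinIntegral (c * R)) atTop (𝓝 (π / 2 * sign c)) := by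
  rcases lt_trichotomy c 0 with hc | rfl | hc
  · have h := (tendsto_sinIntegral_atTop.comp
      (tendsto_id.const_mul_atTop (neg_pos.2 hc))).neg
    simpa [Function.comp_def, sinIntegral_neg, sign_of_neg hc] using h
  · simp [sinIntegral_zero]
  · have h := tendsto_sinIntegral_atTop.comp (tendsto_id.const_mul_atTop hc)
    simpa [Function.comp_def, sign_of_pos hc] using h

lemma abs_sinIntegral_le_three (R : ℝ) : |sinIntegral R| ≤ 3 := by
  wlog hR : 0 ≤ R generalizing R
  · simpa [sinIntegral_neg] using this (-R) (by linarith)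
  rcases le_total R 1 with hR1 | hR1
  · have h : ‖∫ x in (0 : ℝ)..R, sinc x‖ ≤ 1 * |R - 0| :=
      intervalIntegral.norm_integral_le_of_norm_le_const fun x _ ↦ abs_sinc_le_one x
    rw [sub_zero, abs_of_nonneg hR, ← sinIntegral, norm_eq_abs] at h
    linarith
  · have h := abs_sinIntegral_sub_pi_div_two_le (by linarith : 0 < R)
    have hinv : R⁻¹ ≤ 1 := inv_le_one_of_one_le₀ hR1
    rw [abs_le] at h ⊢
    constructor <;> linarith [pi_pos, pi_lt_four]

/-! ### Oscillatory integrals -/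

lemma abs_integral_mul_cos_comp_mul_deriv_le {u u' φ φ' : ℝ → ℝ} {a b x : ℝ} (hab : a ≤ b)
    (hx : 0 < x) (hu : ∀ t ∈ uIcc a b, HasDerivAt u (u' t) t)
    (hφ : ∀ t ∈ uIcc a b, HasDerivAt φ (φ' t) t) (hu' : IntervalIntegrable u' volume a b)
    (hφ' : IntervalIntegrable φ' volume a b) :
    |∫ t in a..b, u t * (cos (x * φ t) * φ' t)| ≤ (|u a| + |u b| + ∫ t in a..b, |u' t|) / x := by
  have hsin (t : ℝ) : |sin (x * φ t) / x| ≤ x⁻¹ := by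
    rw [abs_div, abs_of_pos hx, div_eq_mul_inv]
    exact mul_le_of_le_one_left (inv_pos.2 hx).le (abs_sin_le_one _)
  have hv : ∀ t ∈ uIcc a b,
      HasDerivAt (fun t ↦ sin (x * φ t) / x) (cos (x * φ t) * φ' t) t := fun t ht ↦ by
    refine (((hφ t ht).const_mul x).sin.div_const x).congr_deriv ?_
    field_simp
  have hcos : ContinuousOn (fun t ↦ cos (x * φ t)) (uIcc a b) := fun t ht ↦
    ((hφ t ht).const_mul x).cos.continuousAt.continuousWithinAt
  have hrest : |∫ t in a..b, u' t * (sin (x * φ t) / x)| ≤ ∫ t in a..b, |u' t| * x⁻¹ := by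
    rw [← norm_eq_abs]
    refine intervalIntegral.norm_integral_le_of_norm_le hab (ae_of_all _ fun t _ ↦ ?_)
      (hu'.abs.mul_const x⁻¹)
    rw [norm_mul]
    exact mul_le_mul_of_nonneg_left (hsin t) (abs_nonneg _)
  rw [intervalIntegral.integral_mul_deriv_eq_deriv_mul hu hv hu' (hφ'.continuousOn_mul hcos)]
  calc |u b * (sin (x * φ b) / x) - u a * (sin (x * φ a) / x) -
        ∫ t in a..b, u' t * (sin (x * φ t) / x)|
      ≤ |u b| * |sin (x * φ b) / x| + |u a| * |sin (x * φ a) / x| +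
        |∫ t in a..b, u' t * (sin (x * φ t) / x)| := by
        rw [← abs_mul, ← abs_mul]
        exact (abs_sub _ _).trans (by gcongr; exact abs_sub _ _)
    _ ≤ |u b| * x⁻¹ + |u a| * x⁻¹ + ∫ t in a..b, |u' t| * x⁻¹ := by
        gcongr <;> exact hsin _
    _ = (|u a| + |u b| + ∫ t in a..b, |u' t|) / x := by
        rw [intervalIntegral.integral_mul_const]
        ring

lemma abs_cos_mul_sin_sub_le (p s t : ℝ) :
    |cos s * sin t - p * (sin s * cos t)| ≤ |p| + 1 :=
  calc |cos s * sin t - p * (sin s * cos t)|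
      ≤ |cos s| * |sin t| + |p| * (|sin s| * |cos t|) := by
        simpa only [abs_mul] using abs_sub (cos s * sin t) (p * (sin s * cos t))
    _ ≤ 1 * 1 + |p| * (1 * 1) := by
        gcongr <;> first | exact abs_cos_le_one _ | exact abs_sin_le_one _
    _ = |p| + 1 := by ring

section

variable {p b x : ℝ}

lemma cos_pos_of_mem_uIcc_neg {t : ℝ} (hb : b ∈ Ico 0 (π / 2)) (ht : t ∈ uIcc (-b) b) :
    0 < cos t := by
  rw [uIcc_of_le (by linarith [hb.1])] at ht
  exact cos_pos_of_mem_Ioo ⟨by linarith [ht.1, hb.2], by linarith [ht.2, hb.2]⟩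

lemma hasDerivAt_cos_mul_div_cos {t : ℝ} (ht : cos t ≠ 0) :
    HasDerivAt (fun t ↦ cos (p * t) / cos t)
      ((cos (p * t) * sin t - p * (sin (p * t) * cos t)) / cos t ^ 2) t := by
  have hp : HasDerivAt (fun t ↦ cos (p * t)) (-sin (p * t) * (p * 1)) t :=
    ((hasDerivAt_id t).const_mul p).cos
  refine (hp.div (hasDerivAt_cos t) ht).congr_deriv ?_
  ring

lemma integral_const_div_cos_sq_le {C : ℝ} (hC : 0 ≤ C) (hb : b ∈ Ico 0 (π / 2)) :
    ∫ t in (-b)..b, C / cos t ^ 2 ≤ 2 * C / cos b := by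
  have hcos {t : ℝ} (ht : t ∈ uIcc (-b) b) := cos_pos_of_mem_uIcc_neg hb ht
  have hint : IntervalIntegrable (fun t ↦ C * (1 / cos t ^ 2)) volume (-b) b :=
    (continuousOn_const.mul (continuousOn_const.div (by fun_prop)
      fun t ht ↦ pow_ne_zero 2 (hcos ht).ne')).intervalIntegrable
  have hderiv : ∀ t ∈ uIcc (-b) b, HasDerivAt (fun t ↦ C * tan t) (C * (1 / cos t ^ 2)) t :=
    fun t ht ↦ (hasDerivAt_tan (hcos ht).ne').const_mul C
  have hcosb : 0 < cos b := hcos right_mem_uIcc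
  calc ∫ t in (-b)..b, C / cos t ^ 2 = 2 * C * (sin b / cos b) := by
        simp_rw [← mul_one_div C]
        rw [intervalIntegral.integral_eq_sub_of_hasDerivAt hderiv hint, tan_neg,
          tan_eq_sin_div_cos]
        ring
    _ ≤ 2 * C * (1 / cos b) := by gcongr; exact sin_le_one b
    _ = 2 * C / cos b := mul_one_div _ _

lemma abs_integral_cos_mul_cos_mul_sin_le_of_lt (hx : 0 < x) (hb : b ∈ Ico 0 (π / 2)) :
    |∫ t in (-b)..b, cos (p * t) * cos (x * sin t)| ≤ 2 * (|p| + 2) / cos b / x := by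
  set u' : ℝ → ℝ := fun t ↦ (cos (p * t) * sin t - p * (sin (p * t) * cos t)) / cos t ^ 2
  have hbb : -b ≤ b := by linarith [hb.1]
  have hcos {t : ℝ} (ht : t ∈ uIcc (-b) b) := cos_pos_of_mem_uIcc_neg hb ht
  have hcosb : 0 < cos b := hcos right_mem_uIcc
  have hcont {f : ℝ → ℝ} (hf : Continuous f) :
      IntervalIntegrable (fun t ↦ f t / cos t ^ 2) volume (-b) b :=
    (hf.continuousOn.div (by fun_prop) fun t ht ↦ pow_ne_zero 2 (hcos ht).ne').intervalIntegrable
  have hu' : IntervalIntegrable u' volume (-b) b := hcont (by fun_prop)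
  have hamp : |cos (p * b) / cos b| ≤ 1 / cos b := by
    rw [abs_div, abs_of_pos hcosb]
    gcongr
    exact abs_cos_le_one _
  have hvar : ∫ t in (-b)..b, |u' t| ≤ 2 * (|p| + 1) / cos b := by
    refine le_trans ?_ (integral_const_div_cos_sq_le (by positivity) hb)
    refine intervalIntegral.integral_mono_on hbb hu'.abs (hcont continuous_const) fun t _ ↦ ?_
    rw [abs_div, abs_of_nonneg (sq_nonneg (cos t))]
    gcongr
    exact abs_cos_mul_sin_sub_le p (p * t) t
  have hparts := abs_integral_mul_cos_comp_mul_deriv_le hbb hx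
    (fun t ht ↦ hasDerivAt_cos_mul_div_cos (p := p) (hcos ht).ne')
    (fun t _ ↦ hasDerivAt_sin t) hu' (continuous_cos.intervalIntegrable _ _)
  calc |∫ t in (-b)..b, cos (p * t) * cos (x * sin t)|
      = |∫ t in (-b)..b, cos (p * t) / cos t * (cos (x * sin t) * cos t)| := by
        congr 1
        refine intervalIntegral.integral_congr fun t ht ↦ ?_
        field_simp [(hcos ht).ne']
    _ ≤ (1 / cos b + 1 / cos b + 2 * (|p| + 1) / cos b) / x := by
        refine hparts.trans ?_
        gcongr
        simpa using hamp
    _ = 2 * (|p| + 2) / cos b / x := by ring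

lemma abs_integral_cos_mul_cos_mul_sin_le (hx : 1 ≤ x) :
    |∫ t in (-(π / 2))..(π / 2), cos (p * t) * cos (x * sin t)| ≤ (2 + π * (|p| + 2)) / √x := by
  set δ := 1 / √x
  set f : ℝ → ℝ := fun t ↦ cos (p * t) * cos (x * sin t)
  have hx0 : 0 < √x := by positivity
  have hδ : 0 < δ := by positivity
  have hδ1 : δ ≤ 1 := (div_le_one hx0).2 (one_le_sqrt.2 hx)
  have hδx : δ * x = √x := by rw [one_div_mul_eq_div, div_sqrt]
  have hπ := pi_gt_three
  have hf (a b : ℝ) : IntervalIntegrable f volume a b :=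
    Continuous.intervalIntegrable (by fun_prop) a b
  have hnear (a b : ℝ) : |∫ t in a..b, f t| ≤ |b - a| := by
    simpa using intervalIntegral.norm_integral_le_of_norm_le_const (a := a) (b := b) (f := f)
      (C := 1) fun t _ ↦ by
        rw [norm_mul]
        exact mul_le_one₀ (abs_cos_le_one _) (norm_nonneg _) (abs_cos_le_one _)
  have hfar : |∫ t in (-(π / 2 - δ))..(π / 2 - δ), f t| ≤ π * (|p| + 2) / √x := by
    have hcos : 2 / π * δ ≤ cos (π / 2 - δ) := by
      rw [cos_pi_div_two_sub]
      exact mul_le_sin hδ.le (by linarith)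
    refine (abs_integral_cos_mul_cos_mul_sin_le_of_lt (by linarith)
      ⟨by linarith, by linarith⟩).trans ?_
    calc 2 * (|p| + 2) / cos (π / 2 - δ) / x ≤ 2 * (|p| + 2) / (2 / π * δ) / x := by gcongr
      _ = π * (|p| + 2) / (δ * x) := by field_simp
      _ = π * (|p| + 2) / √x := by rw [hδx]
  have hleft : |∫ t in (-(π / 2))..(-(π / 2 - δ)), f t| ≤ δ :=
    (hnear _ _).trans_eq (by rw [← abs_of_pos hδ]; congr 1; rw [abs_of_pos hδ]; ring)
  have hright : |∫ t in (π / 2 - δ)..(π / 2), f t| ≤ δ :=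
    (hnear _ _).trans_eq (by rw [sub_sub_cancel, abs_of_pos hδ])
  rw [← intervalIntegral.integral_add_adjacent_intervals (hf _ (π / 2 - δ)) (hf _ _),
    ← intervalIntegral.integral_add_adjacent_intervals (hf _ (-(π / 2 - δ))) (hf _ _)]
  calc _ ≤ δ + π * (|p| + 2) / √x + δ :=
        (abs_add_three _ _ _).trans (add_le_add_three hleft hfar hright)
    _ = (2 + π * (|p| + 2)) / √x := by simp only [δ]; ring

end

/-! ### Bessel functions of even order -/

section

variable {E : Type*} [NormedAddCommGroup E] [NormedSpace ℝ E] {f : ℝ → E}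

lemma integral_eq_zero_of_odd (hf : f.Odd) (b : ℝ) : ∫ t in (-b)..b, f t = 0 := by
  have h := intervalIntegral.integral_comp_neg (a := -b) (b := b) f
  simp only [hf _, neg_neg, intervalIntegral.integral_neg] at h
  have : IsAddTorsionFree E := .of_isTorsionFree ℝ E
  exact neg_eq_self.1 h

lemma integral_neg_eq_of_even (hf : f.Even) (b : ℝ) :
    ∫ t in (-b)..0, f t = ∫ t in (0 : ℝ)..b, f t := by
  simpa only [hf _, neg_zero] using
    (intervalIntegral.integral_comp_neg (a := 0) (b := b) f).symm

end

lemma continuous_besselJ (p : ℤ) : Continuous (besselJ p) :=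
  continuous_const.mul
    (intervalIntegral.continuous_parametric_intervalIntegral_of_continuous' (by fun_prop) 0 π)

section

variable {p : ℤ}

lemma cos_mul_add_pi_of_even (hp : Even p) (t : ℝ) : cos (p * (t + π)) = cos (p * t) := by
  rw [mul_add, cos_add_int_mul_pi, hp.neg_one_zpow, one_mul]

lemma sin_mul_pi_sub_of_even (hp : Even p) (t : ℝ) : sin (p * (π - t)) = -sin (p * t) := by
  rw [mul_sub, sin_int_mul_pi_sub, hp.neg_one_zpow, one_mul]

lemma integral_sin_mul_sin_mul_sin (hp : Even p) (x : ℝ) :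
    ∫ t in (0 : ℝ)..π, sin (p * t) * sin (x * sin t) = 0 := by
  have h := intervalIntegral.integral_comp_sub_left (a := 0) (b := π)
    (fun t ↦ sin (p * t) * sin (x * sin t)) π
  simp only [sin_mul_pi_sub_of_even hp, sin_pi_sub, neg_mul, intervalIntegral.integral_neg,
    sub_self, sub_zero] at h
  linarith

lemma besselJ_eq_integral_cos_mul_cos (hp : Even p) (x : ℝ) :
    besselJ p x = (1 / π) * ∫ t in (-(π / 2))..(π / 2), cos (p * t) * cos (x * sin t) := by
  have hper : Function.Periodic (fun t ↦ cos (p * t) * cos (x * sin t)) π := fun t ↦ by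
    simp only [cos_mul_add_pi_of_even hp, sin_add_pi, mul_neg, cos_neg]
  have hshift := hper.intervalIntegral_add_eq (-(π / 2)) 0
  rw [zero_add, show -(π / 2) + π = π / 2 by ring] at hshift
  simp_rw [besselJ, cos_sub]
  rw [intervalIntegral.integral_add (Continuous.intervalIntegrable (by fun_prop) _ _)
    (Continuous.intervalIntegrable (by fun_prop) _ _), integral_sin_mul_sin_mul_sin hp, add_zero,
    hshift]

lemma besselJ_isBigO_atTop (hp : Even p) :
    besselJ p =O[atTop] fun x ↦ x ^ (-(1 / 2) : ℝ) := by
  refine IsBigO.of_bound (1 / π * (2 + π * (|(p : ℝ)| + 2))) ?_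
  filter_upwards [eventually_ge_atTop 1] with x hx
  have hx0 : 0 ≤ x := zero_le_one.trans hx
  rw [besselJ_eq_integral_cos_mul_cos hp, norm_mul, norm_of_nonneg (by positivity : 0 ≤ 1 / π),
    norm_of_nonneg (rpow_nonneg hx0 _), rpow_neg hx0, ← sqrt_eq_rpow, mul_assoc, ← div_eq_mul_inv]
  gcongr
  exact abs_integral_cos_mul_cos_mul_sin_le hx

lemma integrableOn_sin_mul_besselJ_div_self (hp : Even p) (a : ℝ) :
    IntegrableOn (fun x ↦ sin (a * x) * besselJ p x / x) (Ioi 0) := by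
  have hcont : Continuous fun x ↦ a * sinc (a * x) * besselJ p x :=
    (continuous_const.mul (continuous_sinc.comp (by fun_prop))).mul (continuous_besselJ p)
  have hext {x : ℝ} (hx : x ≠ 0) :
      a * sinc (a * x) * besselJ p x = sin (a * x) * besselJ p x / x := by
    rw [mul_sinc_mul a hx, div_mul_eq_mul_div]
  have hsinc : (fun x ↦ a * sinc (a * x)) =O[atTop] fun x ↦ x ^ (-1 : ℝ) := by
    refine IsBigO.of_bound 1 ?_
    filter_upwards [eventually_gt_atTop 0] with x hx
    rw [mul_sinc_mul a hx.ne', rpow_neg_one, norm_div, norm_inv, one_mul, div_eq_mul_inv]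
    exact mul_le_of_le_one_left (by positivity) (abs_sin_le_one _)
  have hdecay : (fun x ↦ a * sinc (a * x) * besselJ p x) =O[atTop] fun x ↦ x ^ (-(3 / 2) : ℝ) := by
    refine (hsinc.mul (besselJ_isBigO_atTop hp)).congr' .rfl ?_
    filter_upwards [eventually_gt_atTop 0] with x hx
    rw [← rpow_add hx]
    norm_num
  have hint : IntegrableOn (fun x ↦ a * sinc (a * x) * besselJ p x) (Ici 0) :=
    (hcont.locallyIntegrable.locallyIntegrableOn _).integrableOn_of_isBigO_atTop hdecay
      (integrableAtFilter_rpow_atTop_iff.2 (by norm_num))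
  exact (hint.mono_set Ioi_subset_Ici_self).congr_fun (fun x hx ↦ hext (ne_of_gt hx))
    measurableSet_Ioi

lemma sin_mul_besselJ (hp : Even p) (a x : ℝ) :
    sin (a * x) * besselJ p x =
      (1 / π) * ∫ t in (-(π / 2))..(π / 2), cos (p * t) * sin ((a - sin t) * x) := by
  have hodd : Function.Odd fun t ↦ cos (a * x) * (cos (p * t) * sin (x * sin t)) := fun t ↦ by
    simp only [mul_neg, cos_neg, sin_neg]
  have hexpand (t : ℝ) : cos (p * t) * sin ((a - sin t) * x) =
      sin (a * x) * (cos (p * t) * cos (x * sin t)) -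
        cos (a * x) * (cos (p * t) * sin (x * sin t)) := by
    rw [sub_mul, sin_sub, mul_comm (sin t) x]
    ring
  simp_rw [hexpand]
  rw [intervalIntegral.integral_sub (Continuous.intervalIntegrable (by fun_prop) _ _)
    (Continuous.intervalIntegrable (by fun_prop) _ _), integral_eq_zero_of_odd hodd, sub_zero,
    intervalIntegral.integral_const_mul, besselJ_eq_integral_cos_mul_cos hp]
  ring

lemma integral_sin_mul_besselJ_div_self_eq_integral_sinIntegral (hp : Even p) (a R : ℝ) :
    ∫ x in (0 : ℝ)..R, sin (a * x) * besselJ p x / x =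
      (1 / π) * ∫ t in (-(π / 2))..(π / 2), cos (p * t) * sinIntegral ((a - sin t) * R) := by
  have hcont : Continuous (Function.uncurry fun x t : ℝ ↦
      cos (p * t) * ((a - sin t) * sinc ((a - sin t) * x))) := by
    unfold Function.uncurry
    exact .mul (by fun_prop) (.mul (by fun_prop) (continuous_sinc.comp (by fun_prop)))
  have hkernel {x : ℝ} (hx : x ≠ 0) : sin (a * x) * besselJ p x / x =
      (1 / π) * ∫ t in (-(π / 2))..(π / 2),
        cos (p * t) * ((a - sin t) * sinc ((a - sin t) * x)) := by
    simp_rw [mul_sinc_mul _ hx, ← mul_div_assoc]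
    rw [intervalIntegral.integral_div, sin_mul_besselJ hp, mul_div_assoc]
  calc ∫ x in (0 : ℝ)..R, sin (a * x) * besselJ p x / x
      = (1 / π) * ∫ x in (0 : ℝ)..R, ∫ t in (-(π / 2))..(π / 2),
          cos (p * t) * ((a - sin t) * sinc ((a - sin t) * x)) := by
        rw [← intervalIntegral.integral_const_mul]
        refine intervalIntegral.integral_congr_ae ?_
        filter_upwards [Measure.ae_ne volume (0 : ℝ)] with x hx _ using hkernel hx
    _ = (1 / π) * ∫ t in (-(π / 2))..(π / 2), ∫ x in (0 : ℝ)..R,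
          cos (p * t) * ((a - sin t) * sinc ((a - sin t) * x)) := by
        rw [intervalIntegral_intervalIntegral_swap]
        exact (hcont.continuousOn.integrableOn_compact
          (isCompact_uIcc.prod isCompact_uIcc)).mono_set
            (prod_mono uIoc_subset_uIcc uIoc_subset_uIcc)
    _ = _ := by
        simp_rw [intervalIntegral.integral_const_mul (cos _), integral_mul_sinc_mul]

lemma integral_Ioi_sin_mul_besselJ_div_self_eq_integral_sign (hp : Even p) (a : ℝ) :
    ∫ x in Ioi (0 : ℝ), sin (a * x) * besselJ p x / x =
      (1 / 2) * ∫ t in (-(π / 2))..(π / 2), cos (p * t) * sign (a - sin t) := by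
  have hlim : Tendsto
      (fun R ↦ ∫ t in (-(π / 2))..(π / 2), cos (p * t) * sinIntegral ((a - sin t) * R)) atTop
      (𝓝 (∫ t in (-(π / 2))..(π / 2), cos (p * t) * (π / 2 * sign (a - sin t)))) := by
    refine intervalIntegral.tendsto_integral_filter_of_dominated_convergence (fun _ ↦ 3) ?_ ?_
      intervalIntegrable_const ?_
    · refine .of_forall fun R ↦ Continuous.aestronglyMeasurable ?_
      exact .mul (by fun_prop) (continuous_sinIntegral.comp (by fun_prop))
    · refine .of_forall fun R ↦ ae_of_all _ fun t _ ↦ ?_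
      rw [norm_mul]
      exact (mul_le_of_le_one_left (norm_nonneg _) (abs_cos_le_one _)).trans
        (abs_sinIntegral_le_three _)
    · exact ae_of_all _ fun t _ ↦ (tendsto_sinIntegral_mul_atTop (a - sin t)).const_mul _
  have hpartial := intervalIntegral_tendsto_integral_Ioi 0
    (integrableOn_sin_mul_besselJ_div_self hp a) tendsto_id
  simp only [id, integral_sin_mul_besselJ_div_self_eq_integral_sinIntegral hp] at hpartial
  rw [tendsto_nhds_unique hpartial (hlim.const_mul (1 / π))]
  simp_rw [mul_left_comm _ (π / 2)]
  rw [intervalIntegral.integral_const_mul]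
  field_simp

end

lemma integral_mul_sign_sin_sub_sin {f : ℝ → ℝ} {α : ℝ} (hα : α ∈ Icc (-(π / 2)) (π / 2))
    (hf : IntervalIntegrable f volume (-(π / 2)) (π / 2)) :
    ∫ t in (-(π / 2))..(π / 2), f t * sign (sin α - sin t) =
      (∫ t in (-(π / 2))..α, f t) - ∫ t in α..(π / 2), f t := by
  have hmem : α ∈ uIcc (-(π / 2)) (π / 2) := Icc_subset_uIcc hα
  have hleft : EqOn f (fun t ↦ f t * sign (sin α - sin t)) (uIoo (-(π / 2)) α) := fun t ht ↦ by
    rw [uIoo_of_le hα.1] at ht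
    have hsin : sin t < sin α := sin_lt_sin_of_lt_of_le_pi_div_two ht.1.le hα.2 ht.2
    simp only [sign_of_pos (sub_pos.2 hsin), mul_one]
  have hright : EqOn (-f) (fun t ↦ f t * sign (sin α - sin t)) (uIoo α (π / 2)) := fun t ht ↦ by
    rw [uIoo_of_le hα.2] at ht
    have hsin : sin α < sin t := sin_lt_sin_of_lt_of_le_pi_div_two hα.1 ht.2.le ht.1
    simp only [sign_of_neg (sub_neg.2 hsin), mul_neg_one, Pi.neg_apply]
  have hfleft : IntervalIntegrable f volume (-(π / 2)) α :=
    hf.mono_set (uIcc_subset_uIcc_left hmem)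
  have hfright : IntervalIntegrable f volume α (π / 2) :=
    hf.mono_set (uIcc_subset_uIcc_right hmem)
  rw [← intervalIntegral.integral_add_adjacent_intervals (hfleft.congr_uIoo hleft)
    (hfright.neg.congr_uIoo hright), ← intervalIntegral.integral_congr_uIoo hleft,
    ← intervalIntegral.integral_congr_uIoo hright, sub_eq_add_neg]
  simp only [Pi.neg_apply, intervalIntegral.integral_neg]

lemma integral_mul_sign_sin_sub_sin_of_even {f : ℝ → ℝ} {α : ℝ} (hα : α ∈ Icc (-(π / 2)) (π / 2))
    (hf : Continuous f) (hfe : f.Even) :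
    ∫ t in (-(π / 2))..(π / 2), f t * sign (sin α - sin t) = 2 * ∫ t in (0 : ℝ)..α, f t := by
  have hint (a b : ℝ) : IntervalIntegrable f volume a b := hf.intervalIntegrable a b
  rw [integral_mul_sign_sin_sub_sin hα (hint _ _),
    ← intervalIntegral.integral_add_adjacent_intervals (hint _ 0) (hint 0 α),
    integral_neg_eq_of_even hfe,
    ← intervalIntegral.integral_add_adjacent_intervals (hint 0 α) (hint α _)]
  ring

lemma integral_sin_sin_mul_besselJ_div_self {p : ℤ} (hp : Even p) {α : ℝ}
    (hα : α ∈ Icc (-(π / 2)) (π / 2)) :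
    ∫ x in Ioi (0 : ℝ), sin (sin α * x) * besselJ p x / x = ∫ t in (0 : ℝ)..α, cos (p * t) := by
  rw [integral_Ioi_sin_mul_besselJ_div_self_eq_integral_sign hp,
    integral_mul_sign_sin_sub_sin_of_even hα (by fun_prop) fun t ↦ by rw [mul_neg, cos_neg]]
  ring

theorem integral_sin_mul_besselJ_div_self_general (a : ℝ) (ha : a ∈ Icc (-1) 1) :
    (∀ p : ℤ, Even p → p ≠ 0 →
        ∫ x in Ioi (0 : ℝ), sin (a * x) * besselJ p x / x =
          (1 / (p : ℝ)) * sin (p * arcsin a)) ∧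
      ∫ x in Ioi (0 : ℝ), sin (a * x) * besselJ 0 x / x = arcsin a := by
  have h {p : ℤ} (hp : Even p) := integral_sin_sin_mul_besselJ_div_self hp (arcsin_mem_Icc a)
  rw [sin_arcsin ha.1 ha.2] at h
  refine ⟨fun p hp hp0 ↦ ?_, ?_⟩
  · rw [h hp, intervalIntegral.integral_comp_mul_left cos (Int.cast_ne_zero.2 hp0), integral_cos]
    simp
  · rw [h Even.zero]
    simp

/-- For `a ∈ (0,1)` and even `p ≠ 0`, `∫₀^∞ sin(ax) J_p(x)/x dx = (1/p) sin(p arcsin a)`;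
and `∫₀^∞ sin(ax) J_0(x)/x dx = arcsin a`. -/
theorem integral_sin_mul_besselJ_div_self (a : ℝ) (ha0 : 0 < a) (ha1 : a < 1) :
    (∀ p : ℤ, Even p → p ≠ 0 →
        ∫ x in Set.Ioi (0 : ℝ), Real.sin (a * x) * besselJ p x / x =
          (1 / (p : ℝ)) * Real.sin (p * Real.arcsin a)) ∧
      ∫ x in Set.Ioi (0 : ℝ), Real.sin (a * x) * besselJ 0 x / x = Real.arcsin a :=
  integral_sin_mul_besselJ_div_self_general a ⟨by linarith, ha1.le⟩
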